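/- Let q be a power of a prime p, let k be a positive integer with k ≡ 2 (mod 4), k > 2 and gcd(k/2, q−1) = 1, let a ∈ F_q^*, and let D = {x ∈ F_{q^k} : Tr_{q^2/q}(x^{(q^k−1)/(q^2−1)}) + a = 0}. Then #{b ∈ F_{q^k}^* : w(c_b) = (q^k − q^{k/2 − 1})/(q+1)} = q(q^k − 1)/(q+1) and #{b ∈ F_{q^k}^* : w(c_b) = (q^k + q^{k/2})/(q+1)} = (q^k − 1)/(q+1); in particular every nonzero codeword of C_D has one of these two weights, C_D has length q(q^k−1)/(q²−1), dimension k, and minimum distance (q^k − q^{k/2 − 1})/(q+1). -/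

import Mathlib

open Classical in
theorem aux_card_pow_eq {F : Type} [Field F] [Fintype F] (m n : ℕ) (hm : 0 < m)
    (h : m * n = Fintype.card F - 1) (u : F) (hu : u ^ n = 1) (hn : 0 < n) :
    (Finset.univ.filter (fun d : F => d ^ m = u)).card = m := by
  obtain ⟨g, hg⟩ := IsCyclic.exists_generator (α := Fˣ)
  have ho : orderOf g = m * n := by
    rw [orderOf_eq_card_of_forall_mem_zpowers hg, Nat.card_units, Nat.card_eq_fintype_card, h]
  have hu0 : u ≠ 0 := by
    rintro rfl
    rw [zero_pow hn.ne'] at hu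
    exact zero_ne_one hu
  have hprim : IsPrimitiveRoot (g : F) (m * n) := by
    rw [← ho, IsPrimitiveRoot.coe_units_iff]
    exact IsPrimitiveRoot.orderOf g
  have hz : IsPrimitiveRoot ((g : F) ^ n) m := hprim.pow (by positivity) (mul_comm _ _)
  have hex : ∃ v : F, v ^ m = u := by
    obtain ⟨j, hj⟩ := (Submonoid.mem_powers_iff _ _).1
      ((mem_powers_iff_mem_zpowers).2 (hg (Units.mk0 u hu0)))
    have hj' : (g : F) ^ j = u := by
      have := congrArg (fun x : Fˣ => (x : F)) hj
      simpa using this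
    rw [← hj', ← pow_mul] at hu
    have hd := (hprim.pow_eq_one_iff_dvd _).1 hu
    obtain ⟨t, ht⟩ := Nat.dvd_of_mul_dvd_mul_right hn hd
    exact ⟨(g : F) ^ t, by rw [← hj', ht, ← pow_mul, mul_comm]⟩
  have hc := hz.card_nthRoots u
  rw [if_pos hex] at hc
  have : Finset.univ.filter (fun d : F => d ^ m = u) = (Polynomial.nthRoots m u).toFinset := by
    ext d
    simp [Polynomial.mem_nthRoots hm]
  rw [this, Multiset.toFinset_card_of_nodup (hz.nthRoots_nodup hu0), hc]

open Classical in
theorem aux_trace_count {K E : Type} [Field K] [Field E] [Fintype K] [Fintype E] [Algebra K E]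
    (u : E) (hu : u ≠ 0) :
    Fintype.card K * (Finset.univ.filter (fun c : E => Algebra.trace K E (u * c) ≠ 0)).card
      = (Fintype.card K - 1) * Fintype.card E := by
  let φ : E →+ K := ((Algebra.trace K E).comp (LinearMap.mulLeft K u)).toAddMonoidHom
  have hφ : ∀ c, φ c = Algebra.trace K E (u * c) := fun c => rfl
  have hs : Function.Surjective φ := by
    intro y
    obtain ⟨x, hx⟩ := Algebra.trace_surjective K E y
    exact ⟨u⁻¹ * x, by rw [hφ, mul_inv_cancel_left₀ hu, hx]⟩
  have h1 := AddSubgroup.card_eq_card_quotient_mul_card_addSubgroup φ.ker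
  rw [Nat.card_congr (QuotientAddGroup.quotientKerEquivOfSurjective φ hs).toEquiv] at h1
  have h2 : Nat.card φ.ker
      = (Finset.univ.filter (fun c : E => Algebra.trace K E (u * c) = 0)).card := by
    rw [← Fintype.card_subtype, ← Nat.card_eq_fintype_card]
    rfl
  rw [h2, Nat.card_eq_fintype_card, Nat.card_eq_fintype_card] at h1
  have h3 := Finset.card_filter_add_card_filter_not (s := (Finset.univ : Finset E))
    (fun c : E => Algebra.trace K E (u * c) = 0)
  rw [Finset.card_univ] at h3
  simp only [ne_eq]
  have hK : 0 < Fintype.card K := Fintype.card_pos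
  obtain ⟨r, hr⟩ := Nat.exists_eq_succ_of_ne_zero hK.ne'
  rw [hr] at h1 ⊢
  simp only [Nat.succ_eq_add_one, Nat.add_sub_cancel] at *
  nlinarith

theorem aux_trace_two {K E : Type} [Field K] [Field E] [Fintype K] [Fintype E] [Algebra K E]
    (h2 : Module.finrank K E = 2) (x : E) (hx : x ≠ 0) :
    Algebra.trace K E x = 0 ↔ x ^ (Fintype.card K - 1) = -1 := by
  rw [← map_eq_zero (algebraMap K E), FiniteField.algebraMap_trace_eq_sum_pow, h2]
  simp only [Finset.sum_range_succ, Finset.sum_range_zero, pow_zero, pow_one, zero_add,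
    Nat.card_eq_fintype_card]
  obtain ⟨r, hr⟩ := Nat.exists_eq_succ_of_ne_zero (Fintype.card_pos (α := K)).ne'
  rw [hr, Nat.succ_sub_one, pow_succ, show x + x ^ r * x = (x ^ r + 1) * x by ring,
    mul_eq_zero, or_iff_left hx, eq_neg_iff_add_eq_zero]

open Classical in
theorem aux_double_count {K L E : Type} [Field K] [Field L] [Field E] [Fintype K] [Fintype L]
    [Fintype E] [Algebra K L] [Algebra L E] [Algebra K E] [IsScalarTower K L E]
    (h2 : Module.finrank L E = 2) (S : Finset E) (h0 : (0 : E) ∉ S)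
    (hS : ∀ c : L, c ≠ 0 → ∀ d ∈ S, algebraMap L E c * d ∈ S) (b : E) (hb : b ≠ 0) :
    Fintype.card K * ((Fintype.card L - 1) *
      (S.filter (fun d => Algebra.trace K E (b * d) ≠ 0)).card)
      = (S.filter (fun d => ¬ (b * d) ^ (Fintype.card L - 1) = -1)).card *
        ((Fintype.card K - 1) * Fintype.card L) := by
  have hfib : ∀ d ∈ S, Fintype.card K *
      (Finset.univ.filter (fun c : L => Algebra.trace K E (b * (algebraMap L E c * d)) ≠ 0)).card
      = if ¬ (b * d) ^ (Fintype.card L - 1) = -1 then (Fintype.card K - 1) * Fintype.card L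
        else 0 := by
    intro d hd
    have hd0 : b * d ≠ 0 := mul_ne_zero hb (fun h => h0 (h ▸ hd))
    have key : ∀ c : L, Algebra.trace K E (b * (algebraMap L E c * d))
        = Algebra.trace K L (Algebra.trace L E (b * d) * c) := by
      intro c
      rw [← Algebra.trace_trace (S := L),
        show b * (algebraMap L E c * d) = c • (b * d) by rw [Algebra.smul_def]; ring,
        map_smul, smul_eq_mul, mul_comm]
    simp only [key]
    have := aux_trace_two h2 _ hd0
    split_ifs with h
    · rw [this.2 h]
      simp
    · exact aux_trace_count _ (fun h' => h (this.1 h'))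
  have hcol : ∀ c : L, c ≠ 0 →
      (S.filter (fun d => Algebra.trace K E (b * (algebraMap L E c * d)) ≠ 0)).card
      = (S.filter (fun d => Algebra.trace K E (b * d) ≠ 0)).card := by
    intro c hc
    have hc' : algebraMap L E c ≠ 0 := by simpa using hc
    refine Finset.card_bij' (fun d _ => algebraMap L E c * d) (fun d _ => algebraMap L E c⁻¹ * d)
      ?_ ?_ ?_ ?_
    · intro d hd
      rw [Finset.mem_filter] at hd ⊢
      exact ⟨hS c hc d hd.1, hd.2⟩
    · intro d hd
      rw [Finset.mem_filter] at hd ⊢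
      refine ⟨hS _ (inv_ne_zero hc) d hd.1, ?_⟩
      rw [map_inv₀, mul_inv_cancel_left₀ hc']
      exact hd.2
    · intro d _
      simp [hc]
    · intro d _
      simp [hc]
  have hsum : ∑ c : L, (S.filter
        (fun d => Algebra.trace K E (b * (algebraMap L E c * d)) ≠ 0)).card
      = ∑ d ∈ S, (Finset.univ.filter
        (fun c : L => Algebra.trace K E (b * (algebraMap L E c * d)) ≠ 0)).card := by
    simp only [Finset.card_filter]
    exact Finset.sum_comm
  have hleft : ∑ c : L, (S.filter
        (fun d => Algebra.trace K E (b * (algebraMap L E c * d)) ≠ 0)).card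
      = (Fintype.card L - 1) * (S.filter (fun d => Algebra.trace K E (b * d) ≠ 0)).card := by
    rw [← Finset.add_sum_erase _ _ (Finset.mem_univ (0 : L)),
      Finset.sum_congr rfl (fun c hc => hcol c (Finset.ne_of_mem_erase hc)),
      Finset.sum_const, Finset.card_erase_of_mem (Finset.mem_univ _), Finset.card_univ]
    simp
  rw [← hleft, hsum, Finset.mul_sum, Finset.sum_congr rfl hfib, ← Finset.sum_filter,
    Finset.sum_const, smul_eq_mul]

open Classical in
theorem aux_scale {K E : Type} [Field K] [Field E] [Fintype K] [Fintype E] [Algebra K E]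
    (h : ℕ) (hh : Nat.gcd h (Fintype.card K - 1) = 1) (f : E → K)
    (hf : ∀ (c : K) (d : E), f (algebraMap K E c * d) = c ^ h * f d) (P : E → Prop)
    (hP : ∀ (c : K) (d : E), c ≠ 0 → P d → P (algebraMap K E c * d)) (a : K) (ha : a ≠ 0) :
    (Fintype.card K - 1) * (Finset.univ.filter (fun d : E => f d + a = 0 ∧ P d)).card
      = (Finset.univ.filter (fun d : E => f d ≠ 0 ∧ P d)).card := by
  have hroot : ∀ t : K, t ≠ 0 → ∃ c : K, c ≠ 0 ∧ c ^ h = t := by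
    intro t ht
    have hcop : (Nat.card Kˣ).Coprime h := by
      rw [Nat.card_units, Nat.card_eq_fintype_card]
      exact Nat.Coprime.symm hh
    refine ⟨((powCoprime hcop).symm (Units.mk0 t ht) : Kˣ), Units.ne_zero _, ?_⟩
    have := (powCoprime hcop).apply_symm_apply (Units.mk0 t ht)
    have := congrArg (fun x : Kˣ => (x : K)) this
    simpa using this
  have hle : ∀ s t : K, s ≠ 0 → t ≠ 0 →
      (Finset.univ.filter (fun d : E => f d = s ∧ P d)).card
      ≤ (Finset.univ.filter (fun d : E => f d = t ∧ P d)).card := by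
    intro s t hs ht
    obtain ⟨c, hc, hct⟩ := hroot (t / s) (div_ne_zero ht hs)
    refine Finset.card_le_card_of_injOn (fun d => algebraMap K E c * d) ?_ ?_
    · intro d hd
      simp only [Finset.coe_filter, Finset.mem_univ, true_and, Set.mem_ofPred_eq] at hd ⊢
      refine ⟨?_, hP c d hc hd.2⟩
      rw [hf, hct, hd.1, div_mul_cancel₀ _ hs]
    · intro x _ y _ hxy
      exact mul_left_cancel₀ (by simpa using hc) hxy
  have h1 := Finset.card_eq_sum_card_fiberwise (f := f)
    (s := Finset.univ.filter (fun d : E => f d ≠ 0 ∧ P d))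
    (t := Finset.univ.erase (0 : K)) (by intro d hd; simp at hd ⊢; exact hd.1)
  rw [h1]
  have h2 : ∀ t ∈ Finset.univ.erase (0 : K),
      ((Finset.univ.filter (fun d : E => f d ≠ 0 ∧ P d)).filter (fun d => f d = t)).card
      = (Finset.univ.filter (fun d : E => f d + a = 0 ∧ P d)).card := by
    intro t ht
    have ht := Finset.ne_of_mem_erase ht
    have e1 : (Finset.univ.filter (fun d : E => f d ≠ 0 ∧ P d)).filter (fun d => f d = t)
        = Finset.univ.filter (fun d : E => f d = t ∧ P d) := by
      ext d
      simp only [Finset.mem_filter, Finset.mem_univ, true_and]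
      constructor
      · rintro ⟨⟨_, h⟩, h'⟩
        exact ⟨h', h⟩
      · rintro ⟨h, h'⟩
        exact ⟨⟨h ▸ ht, h'⟩, h⟩
    have e2 : Finset.univ.filter (fun d : E => f d + a = 0 ∧ P d)
        = Finset.univ.filter (fun d : E => f d = -a ∧ P d) := by
      ext d
      simp only [Finset.mem_filter, Finset.mem_univ, true_and, eq_neg_iff_add_eq_zero]
    rw [e1, e2]
    exact le_antisymm (hle _ _ ht (neg_ne_zero.2 ha)) (hle _ _ (neg_ne_zero.2 ha) ht)
  rw [Finset.sum_congr rfl h2, Finset.sum_const, Finset.card_erase_of_mem (Finset.mem_univ _),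
    Finset.card_univ, smul_eq_mul]

theorem aux_odd_quot (q j : ℕ) (hq : 1 ≤ q) : ∃ m, Odd m ∧ m * (q + 1) = q ^ (2 * j + 1) + 1 := by
  induction j with
  | zero => exact ⟨1, odd_one, by ring⟩
  | succ j ih =>
    obtain ⟨m, hm, h⟩ := ih
    obtain ⟨r, rfl⟩ := Nat.exists_eq_add_of_le' hq
    refine ⟨m + (r + 1) ^ (2 * j) * (r * (r + 1)), hm.add_even ?_, ?_⟩
    · exact (Nat.even_mul_succ_self r).mul_left _
    · rw [add_mul, h]
      ring

open Classical in
/-- The weight computation. -/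
theorem aux_core (q h m M : ℕ) (hh : 0 < h) (hq2 : 2 ≤ q) (hmodd : Odd m)
    (hm : m * (q + 1) = q ^ h + 1) (hM : M = m * (q ^ h - 1)) (hgcd : Nat.gcd h (q - 1) = 1)
    (Fq Ff L Fk : Type) [Field Fq] [Field Ff] [Field Fk] [Field L]
    [Fintype Fq] [Fintype Ff] [Fintype Fk] [Fintype L]
    [Algebra Fq Ff] [Algebra Ff Fk] [Algebra Fq Fk] [IsScalarTower Fq Ff Fk]
    [Algebra Fq L] [Algebra L Fk] [IsScalarTower Fq L Fk]
    (hcq : Fintype.card Fq = q) (hcf : Fintype.card Ff = q ^ 2)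
    (hck : Fintype.card Fk = q ^ (2 * h)) (hcl : Fintype.card L = q ^ h)
    (N : ℕ) (hN : N * (q - 1) = M)
    (hnorm : ∀ x : Fk, algebraMap Ff Fk (Algebra.norm Ff x) = x ^ N)
    (a : Fq) (ha : a ≠ 0) :
    (Nat.card {b : Fk // b ^ M = 1} = M) ∧
    (∀ b : Fk, b ≠ 0 →
      (Nat.card {d : Fk // Algebra.trace Fq Ff (Algebra.norm Ff d) + a = 0 ∧
          Algebra.trace Fq Fk (b * d) ≠ 0} : ℚ)
       = (q : ℚ) ^ (h - 1) * ((q : ℚ) ^ h - m + if b ^ M = 1 then 1 else 0)) ∧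
    (q - 1) * Nat.card {x : Fk // Algebra.trace Fq Ff (Algebra.norm Ff x) + a = 0} + M + 1
      = q ^ (2 * h) := by
  classical
  have hqh : q ≤ q ^ h := Nat.le_self_pow hh.ne' q
  have hm0 : 0 < m := hmodd.pos
  have hM0 : 0 < M := by
    rw [hM]
    exact Nat.mul_pos hm0 (by omega)
  have hpk : (q ^ h - 1) * (q ^ h + 1) = q ^ (2 * h) - 1 := by
    rw [two_mul, pow_add, mul_comm, ← Nat.sq_sub_sq _ 1, one_pow, sq]
  have hMq : M * (q + 1) = q ^ (2 * h) - 1 := by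
    rw [hM, mul_right_comm, hm, mul_comm, hpk]
  -- degrees
  have hinjq : Function.Injective (fun n => q ^ n) := Nat.pow_right_injective hq2
  have hrf : Module.finrank Fq Ff = 2 := by
    have := Module.card_eq_pow_finrank (K := Fq) (V := Ff)
    rw [hcq, hcf] at this
    exact (hinjq this).symm
  have hrl : Module.finrank L Fk = 2 := by
    have := Module.card_eq_pow_finrank (K := L) (V := Fk)
    rw [hcl, hck, ← pow_mul] at this
    have := hinjq this
    exact (Nat.eq_of_mul_eq_mul_left hh (by rw [← this, mul_comm]))
  have hrk : Module.finrank Ff Fk = h := by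
    have := Module.card_eq_pow_finrank (K := Ff) (V := Fk)
    rw [hcf, hck, ← pow_mul] at this
    have := hinjq this
    exact (Nat.eq_of_mul_eq_mul_left two_pos this).symm
  -- signs
  have hs1 : (-1 : Fk) ^ (q + 1) = 1 := by
    have := FiniteField.pow_card (-1 : Fq)
    have := congrArg (algebraMap Fq Fk) this
    rw [hcq] at this
    simp only [map_pow, map_neg, map_one] at this
    rw [pow_succ, this]
    ring
  have hs2 : (-1 : Fk) ^ (q ^ h + 1) = 1 := by
    rw [← hm, mul_comm, pow_mul, hs1, one_pow]
  have hne : (-1 : Fk) ≠ 0 := neg_ne_zero.2 one_ne_zero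
  have cS : (Finset.univ.filter (fun d : Fk => d ^ M = -1)).card = M :=
    aux_card_pow_eq M (q + 1) hM0 (by rw [hck, hMq]) _ hs1 (by omega)
  have c1 : (Finset.univ.filter (fun d : Fk => d ^ M = 1)).card = M :=
    aux_card_pow_eq M (q + 1) hM0 (by rw [hck, hMq]) _ (one_pow _) (by omega)
  -- the zero set of f
  set f : Fk → Fq := fun d => Algebra.trace Fq Ff (Algebra.norm Ff d) with hf
  have hf0 : f 0 = 0 := by simp [hf, Algebra.norm_zero]
  have hfS : ∀ d : Fk, d ≠ 0 → (f d = 0 ↔ d ^ M = -1) := by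
    intro d hd
    have hn0 : Algebra.norm Ff d ≠ 0 := Algebra.norm_ne_zero_iff.2 hd
    rw [hf]
    simp only
    rw [aux_trace_two hrf _ hn0, ← (algebraMap Ff Fk).injective.eq_iff, map_pow, hnorm, hcq,
      ← pow_mul, hN, map_neg, map_one]
  have hfs : ∀ (c : Fq) (d : Fk), f (algebraMap Fq Fk c * d) = c ^ h * f d := by
    intro c d
    rw [hf]
    simp only
    rw [map_mul, IsScalarTower.algebraMap_apply Fq Ff Fk, Algebra.norm_algebraMap, hrk, ← map_pow,
      ← Algebra.smul_def, map_smul, smul_eq_mul]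
  have hgcd' : Nat.gcd h (Fintype.card Fq - 1) = 1 := by rw [hcq, hgcd]
  refine ⟨?_, ?_, ?_⟩
  · rw [Nat.card_eq_fintype_card, Fintype.card_subtype, c1]
  · intro b hb
    rw [Nat.card_eq_fintype_card, Fintype.card_subtype]
    have e1 := aux_scale h hgcd' f hfs (fun d => Algebra.trace Fq Fk (b * d) ≠ 0) (by
      intro c d hc hd
      rw [← Algebra.smul_def, mul_smul_comm, map_smul]
      exact smul_ne_zero hc hd) a ha
    replace e1 : (Fintype.card Fq - 1) * (Finset.univ.filter (fun d : Fk =>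
        Algebra.trace Fq Ff (Algebra.norm Ff d) + a = 0 ∧
          Algebra.trace Fq Fk (b * d) ≠ 0)).card
        = (Finset.univ.filter
          (fun d : Fk => f d ≠ 0 ∧ Algebra.trace Fq Fk (b * d) ≠ 0)).card := by
      convert e1
    have e2 := aux_trace_count (K := Fq) b hb
    have e3 := Finset.card_filter_add_card_filter_not
      (s := Finset.univ.filter (fun d : Fk => Algebra.trace Fq Fk (b * d) ≠ 0)) (fun d => f d = 0)
    have e4 : (Finset.univ.filter (fun d : Fk => Algebra.trace Fq Fk (b * d) ≠ 0)).filter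
          (fun d => f d = 0)
        = (Finset.univ.filter (fun d : Fk => d ^ M = -1)).filter
          (fun d : Fk => Algebra.trace Fq Fk (b * d) ≠ 0) := by
      ext d
      simp only [Finset.mem_filter, Finset.mem_univ, true_and]
      constructor
      · rintro ⟨h1, h2⟩
        have : d ≠ 0 := by
          rintro rfl
          simp at h1
        exact ⟨(hfS d this).1 h2, h1⟩
      · rintro ⟨h2, h1⟩
        have : d ≠ 0 := by
          rintro rfl
          simp at h1
        exact ⟨h1, (hfS d this).2 h2⟩
    have e5 : (Finset.univ.filter (fun d : Fk => Algebra.trace Fq Fk (b * d) ≠ 0)).filter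
          (fun d => ¬ f d = 0)
        = Finset.univ.filter (fun d : Fk => f d ≠ 0 ∧ Algebra.trace Fq Fk (b * d) ≠ 0) := by
      ext d
      simp only [Finset.mem_filter, Finset.mem_univ, true_and, ne_eq]
      exact and_comm
    have e6 := aux_double_count (K := Fq) hrl (Finset.univ.filter (fun d : Fk => d ^ M = -1))
      (by simp [zero_pow hM0.ne', hne.symm]) (by
        intro c hc d hd
        simp only [Finset.mem_filter, Finset.mem_univ, true_and] at hd ⊢
        have : c ^ (q ^ h - 1) = 1 := by rw [← hcl]; exact FiniteField.pow_card_sub_one_eq_one c hc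
        rw [mul_pow, hd, ← map_pow, hM, mul_comm m, pow_mul, this, one_pow, map_one, one_mul]) b hb
    have e7 := Finset.card_filter_add_card_filter_not
      (s := Finset.univ.filter (fun d : Fk => d ^ M = -1))
      (fun d => (b * d) ^ (Fintype.card L - 1) = -1)
    have e8 : ((Finset.univ.filter (fun d : Fk => d ^ M = -1)).filter
      (fun d => (b * d) ^ (Fintype.card L - 1) = -1)).card
        = if b ^ M = 1 then q ^ h - 1 else 0 := by
      rw [hcl]
      have hkey : ∀ d : Fk, (b * d) ^ (q ^ h - 1) = -1 → b ^ M * d ^ M = -1 := by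
        intro d hd
        rw [← mul_pow, hM, mul_comm m, pow_mul, hd, hmodd.neg_one_pow]
      split_ifs with hbM
      · have hbr : b ^ (q ^ h - 1) ≠ 0 := pow_ne_zero _ hb
        have : (Finset.univ.filter (fun d : Fk => d ^ M = -1)).filter
            (fun d => (b * d) ^ (q ^ h - 1) = -1)
            = Finset.univ.filter (fun d : Fk => d ^ (q ^ h - 1) = -1 * (b ^ (q ^ h - 1))⁻¹) := by
          ext d
          simp only [Finset.mem_filter, Finset.mem_univ, true_and]
          rw [eq_mul_inv_iff_mul_eq₀ hbr, ← mul_pow, mul_comm d b]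
          constructor
          · exact fun h => h.2
          · intro h
            have := hkey d h
            rw [hbM, one_mul] at this
            exact ⟨this, h⟩
        rw [this]
        refine aux_card_pow_eq _ (q ^ h + 1) (by omega) (by rw [hck, hpk]) _ ?_ (by omega)
        rw [mul_pow, hs2, one_mul, inv_pow, ← pow_mul, hpk, ← hck,
          FiniteField.pow_card_sub_one_eq_one b hb, inv_one]
      · rw [Finset.card_eq_zero, Finset.filter_eq_empty_iff]
        intro d hd h
        simp only [Finset.mem_filter, Finset.mem_univ, true_and] at hd
        have := hkey d h
        rw [hd] at this
        exact hbM (by linear_combination -this)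
    rw [e4, e5, ← e1] at e3
    rw [e8, cS] at e7
    rw [hcq] at e2 e3 e6
    rw [hck] at e2
    rw [hcl] at e6 e7
    obtain ⟨j, rfl⟩ := Nat.exists_eq_succ_of_ne_zero hh.ne'
    simp only [Nat.succ_eq_add_one, Nat.add_sub_cancel] at *
    generalize (Finset.univ.filter (fun d : Fk =>
      Algebra.trace Fq Ff (Algebra.norm Ff d) + a = 0 ∧ Algebra.trace Fq Fk (b * d) ≠ 0)).card = w
      at *
    generalize (Finset.univ.filter (fun d : Fk => Algebra.trace Fq Fk (b * d) ≠ 0)).card = T at *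
    generalize ((Finset.univ.filter (fun d : Fk => d ^ M = -1)).filter
          (fun d : Fk => Algebra.trace Fq Fk (b * d) ≠ 0)).card = W at *
    generalize ((Finset.univ.filter (fun d : Fk => d ^ M = -1)).filter
          (fun d : Fk => ¬ (b * d) ^ (q ^ (j + 1) - 1) = -1)).card = X at *
    have hq1 : ((q - 1 : ℕ) : ℚ) = q - 1 := by rw [Nat.cast_sub (by omega)]; simp
    have hqh1 : ((q ^ (j + 1) - 1 : ℕ) : ℚ) = q * q ^ j - 1 := by
      rw [Nat.cast_sub (by omega)]; push_cast; ring
    have hqpos : (q : ℚ) ≠ 0 := by positivity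
    have hqm : (q : ℚ) - 1 ≠ 0 := by
      have : (2 : ℚ) ≤ q := by exact_mod_cast hq2
      linarith
    have hqhm : (q : ℚ) * q ^ j - 1 ≠ 0 := by
      rw [← hqh1]
      have : q ^ (j + 1) - 1 ≠ 0 := by omega
      exact_mod_cast this
    have e2' : (T : ℚ) = (q - 1) * (q ^ j * (q * q ^ j)) := by
      have := congrArg (Nat.cast (R := ℚ)) e2
      push_cast [hq1] at this
      apply mul_left_cancel₀ hqpos
      rw [this]
      ring
    have e7' : (X : ℚ) = (q * q ^ j - 1) * (m - if b ^ M = 1 then 1 else 0) := by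
      have := congrArg (Nat.cast (R := ℚ)) e7
      rw [hM] at this ⊢
      push_cast [hqh1] at this
      split_ifs at this ⊢ <;> linear_combination this
    have e6' : (W : ℚ) = (m - if b ^ M = 1 then 1 else 0) * ((q - 1) * q ^ j) := by
      have := congrArg (Nat.cast (R := ℚ)) e6
      push_cast [hqh1, hq1] at this
      apply mul_left_cancel₀ hqpos
      apply mul_left_cancel₀ hqhm
      rw [e7'] at this
      linear_combination this
    have e3' := congrArg (Nat.cast (R := ℚ)) e3
    push_cast [hq1] at e3'
    rw [e2', e6'] at e3'
    apply mul_left_cancel₀ hqm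
    linear_combination e3'
  · rw [Nat.card_eq_fintype_card, Fintype.card_subtype]
    have e1 := aux_scale h hgcd' f hfs (fun _ => True) (fun _ _ _ _ => trivial) a ha
    simp only [and_true] at e1
    rw [hcq] at e1
    have e3 := Finset.card_filter_add_card_filter_not
      (s := (Finset.univ : Finset Fk)) (fun d => f d = 0)
    have e4 : Finset.univ.filter (fun d : Fk => f d = 0)
        = insert 0 (Finset.univ.filter (fun d : Fk => d ^ M = -1)) := by
      ext d
      simp only [Finset.mem_filter, Finset.mem_univ, true_and, Finset.mem_insert]
      by_cases hd : d = 0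
      · simp [hd, hf0]
      · simp [hd, hfS d hd]
    rw [e4, Finset.card_insert_of_notMem (by simp [zero_pow hM0.ne', hne.symm]), cS,
      Finset.card_univ, hck] at e3
    simp only [ne_eq] at e1
    rw [← e1] at e3
    simp only [hf] at e3
    omega

/-- **Theorem 2, `f = 2`, `k ≡ 2 (mod 4)`, `k > 2`.** Let `q` be a power
of a prime `p`, `k ≡ 2 (mod 4)`, `k > 2`, `gcd(k/2, q-1) = 1`, `a ∈ F_qˣ`, and
`D = {x ∈ F_{q^k} : Tr_{q²/q}(x^{(q^k-1)/(q²-1)}) + a = 0}`.  Then exactly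
`q(q^k-1)/(q+1)` nonzero `b` give weight `(q^k - q^{k/2-1})/(q+1)` and exactly
`(q^k-1)/(q+1)` give weight `(q^k + q^{k/2})/(q+1)`; every nonzero codeword has one of
these two weights, `C_D` has length `q(q^k-1)/(q²-1)`, dimension `k`, and minimum
distance `(q^k - q^{k/2-1})/(q+1)`. -/
theorem stmt17 (p e q k : ℕ) [Fact p.Prime] (he : 0 < e) (hq : q = p ^ e)
    (hk4 : k % 4 = 2) (hk2 : 2 < k) (hgcd : Nat.gcd (k / 2) (q - 1) = 1)
    (Fq Ff Fk : Type) [Field Fq] [Field Ff] [Field Fk]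
    [Fintype Fq] [Fintype Ff] [Fintype Fk]
    [Algebra Fq Ff] [Algebra Ff Fk] [Algebra Fq Fk] [IsScalarTower Fq Ff Fk]
    (hcq : Fintype.card Fq = q) (hcf : Fintype.card Ff = q ^ 2)
    (hck : Fintype.card Fk = q ^ k)
    (hnorm : ∀ x : Fk,
      algebraMap Ff Fk (Algebra.norm Ff x) = x ^ ((q ^ k - 1) / (q ^ 2 - 1)))
    (a : Fq) (ha : a ≠ 0) :
    (Nat.card {b : Fk // b ≠ 0 ∧
        (Nat.card {d : Fk // Algebra.trace Fq Ff (Algebra.norm Ff d) + a = 0 ∧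
            Algebra.trace Fq Fk (b * d) ≠ 0} : ℚ)
          = ((q : ℚ) ^ k - (q : ℚ) ^ (k / 2 - 1)) / ((q : ℚ) + 1)} : ℚ)
      = (q : ℚ) * ((q : ℚ) ^ k - 1) / ((q : ℚ) + 1) ∧
    (Nat.card {b : Fk // b ≠ 0 ∧
        (Nat.card {d : Fk // Algebra.trace Fq Ff (Algebra.norm Ff d) + a = 0 ∧
            Algebra.trace Fq Fk (b * d) ≠ 0} : ℚ)
          = ((q : ℚ) ^ k + (q : ℚ) ^ (k / 2)) / ((q : ℚ) + 1)} : ℚ)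
      = ((q : ℚ) ^ k - 1) / ((q : ℚ) + 1) ∧
    (∀ b : Fk, b ≠ 0 →
      (Nat.card {d : Fk // Algebra.trace Fq Ff (Algebra.norm Ff d) + a = 0 ∧
          Algebra.trace Fq Fk (b * d) ≠ 0} : ℚ)
          = ((q : ℚ) ^ k - (q : ℚ) ^ (k / 2 - 1)) / ((q : ℚ) + 1) ∨
      (Nat.card {d : Fk // Algebra.trace Fq Ff (Algebra.norm Ff d) + a = 0 ∧
          Algebra.trace Fq Fk (b * d) ≠ 0} : ℚ)
          = ((q : ℚ) ^ k + (q : ℚ) ^ (k / 2)) / ((q : ℚ) + 1)) ∧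
    (Nat.card {x : Fk // Algebra.trace Fq Ff (Algebra.norm Ff x) + a = 0} : ℚ)
      = (q : ℚ) * ((q : ℚ) ^ k - 1) / ((q : ℚ) ^ 2 - 1) ∧
    Function.Injective
      (fun (b : Fk)
          (d : {x : Fk // Algebra.trace Fq Ff (Algebra.norm Ff x) + a = 0}) =>
        Algebra.trace Fq Fk (b * (d : Fk))) ∧
    (∀ b : Fk, b ≠ 0 →
      ((q : ℚ) ^ k - (q : ℚ) ^ (k / 2 - 1)) / ((q : ℚ) + 1)
        ≤ (Nat.card {d : Fk // Algebra.trace Fq Ff (Algebra.norm Ff d) + a = 0 ∧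
            Algebra.trace Fq Fk (b * d) ≠ 0} : ℚ)) := by
  classical
  obtain ⟨h, rfl⟩ : ∃ h, k = 2 * h := ⟨k / 2, by omega⟩
  obtain ⟨j, rfl⟩ : ∃ j, h = 2 * j + 1 := ⟨h / 2, by omega⟩
  have hk' : 2 * (2 * j + 1) / 2 = 2 * j + 1 := by omega
  rw [hk'] at hgcd ⊢
  generalize hh' : 2 * j + 1 = h at *
  have hh : 0 < h := by omega
  have hq2 : 2 ≤ q := hcq ▸ Fintype.one_lt_card
  obtain ⟨m, hmodd, hm⟩ := aux_odd_quot q j (by omega)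
  rw [hh'] at hm
  have hqh : q ≤ q ^ h := Nat.le_self_pow hh.ne' q
  have hpk : (q ^ h - 1) * (q ^ h + 1) = q ^ (2 * h) - 1 := by
    rw [two_mul, pow_add, mul_comm, ← Nat.sq_sub_sq _ 1, one_pow, sq]
  obtain ⟨M, hM⟩ : ∃ M, M = m * (q ^ h - 1) := ⟨_, rfl⟩
  have hMq : M * (q + 1) = q ^ (2 * h) - 1 := by
    rw [hM, mul_right_comm, hm, mul_comm, hpk]
  have hN : (q ^ (2 * h) - 1) / (q ^ 2 - 1) * (q - 1) = M := by
    have hd : q ^ 2 - 1 ∣ q ^ (2 * h) - 1 := by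
      have := Nat.sub_dvd_pow_sub_pow (q ^ 2) 1 h
      rwa [one_pow, ← pow_mul] at this
    have h1 : q ^ 2 - 1 = (q + 1) * (q - 1) := by
      rw [← Nat.sq_sub_sq, one_pow]
    have h2 := Nat.div_mul_cancel hd
    apply Nat.eq_of_mul_eq_mul_right (show 0 < q + 1 by omega)
    generalize (q ^ (2 * h) - 1) / (q ^ 2 - 1) = N at *
    rw [hMq, ← h2, h1]
    ring
  -- the subfield with q ^ h elements
  have : CharP Fq p := by
    refine charP_of_card_eq_prime_pow (f := e) ?_
    rw [hcq, hq]
  have : NeZero h := ⟨hh.ne'⟩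
  have hfr : Module.finrank Fq Fk = 2 * h := by
    have := Module.card_eq_pow_finrank (K := Fq) (V := Fk)
    rw [hcq, hck] at this
    exact (Nat.pow_right_injective hq2 this).symm
  obtain ⟨φ⟩ : Nonempty (FiniteField.Extension Fq p h →ₐ[Fq] Fk) := by
    apply FiniteField.nonempty_algHom_of_finrank_dvd
    rw [FiniteField.finrank_extension, hfr]
    exact dvd_mul_left _ _
  let : Fintype (FiniteField.Extension Fq p h) := Fintype.ofFinite _
  let : Algebra (FiniteField.Extension Fq p h) Fk := φ.toRingHom.toAlgebra
  have : IsScalarTower Fq (FiniteField.Extension Fq p h) Fk :=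
    IsScalarTower.of_algebraMap_eq (fun x => (φ.commutes x).symm)
  have hcl : Fintype.card (FiniteField.Extension Fq p h) = q ^ h := by
    rw [← Nat.card_eq_fintype_card, FiniteField.natCard_extension, Nat.card_eq_fintype_card, hcq]
  obtain ⟨hc1, hw, hlen⟩ := aux_core q h m M hh hq2 hmodd hm hM hgcd Fq Ff
    (FiniteField.Extension Fq p h) Fk hcq hcf hck hcl _ hN hnorm a ha
  -- rational forms
  have hqQ : (2 : ℚ) ≤ q := by exact_mod_cast hq2
  have hq1 : (q : ℚ) + 1 ≠ 0 := by linarith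
  have hqm : (q : ℚ) - 1 ≠ 0 := by linarith
  have hmQ : (m : ℚ) * (q + 1) = q ^ h + 1 := by exact_mod_cast hm
  have hMQ : (M : ℚ) * (q + 1) = q ^ (2 * h) - 1 := by
    have := congrArg (Nat.cast (R := ℚ)) hMq
    rw [Nat.cast_sub (Nat.one_le_pow _ _ (by omega))] at this
    push_cast at this
    exact this
  have hr : (0 : ℚ) < (q : ℚ) ^ (h - 1) := by positivity
  have hqr : (q : ℚ) ^ h = q * q ^ (h - 1) := by
    rw [← pow_succ', Nat.sub_add_cancel hh]
  have hqk : (q : ℚ) ^ (2 * h) = (q * q ^ (h - 1)) * (q * q ^ (h - 1)) := by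
    rw [two_mul, pow_add, hqr]
  set W1 : ℚ := ((q : ℚ) ^ (2 * h) - (q : ℚ) ^ (h - 1)) / ((q : ℚ) + 1) with hW1
  set W2 : ℚ := ((q : ℚ) ^ (2 * h) + (q : ℚ) ^ h) / ((q : ℚ) + 1) with hW2
  have hlt : W1 < W2 := by
    rw [hW1, hW2]
    apply div_lt_div_of_pos_right _ (by linarith)
    have : (0 : ℚ) < (q : ℚ) ^ h := by positivity
    linarith
  have hpos : 0 < W1 := by
    rw [hW1]
    apply div_pos _ (by linarith)
    rw [hqk]
    have : (1 : ℚ) ≤ (q : ℚ) ^ (h - 1) := one_le_pow₀ (by linarith)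
    nlinarith [mul_pos hr hr, mul_le_mul hqQ hqQ (by norm_num) (by linarith)]
  have hw' : ∀ b : Fk, b ≠ 0 →
      (Nat.card {d : Fk // Algebra.trace Fq Ff (Algebra.norm Ff d) + a = 0 ∧
          Algebra.trace Fq Fk (b * d) ≠ 0} : ℚ) = if b ^ M = 1 then W2 else W1 := by
    intro b hb
    rw [hw b hb]
    split_ifs with h1
    · rw [hW2, eq_div_iff hq1, hqk]
      rw [hqr] at hmQ ⊢
      linear_combination -(q : ℚ) ^ (h - 1) * hmQ
    · rw [hW1, eq_div_iff hq1, hqk]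
      rw [hqr] at hmQ ⊢
      linear_combination -(q : ℚ) ^ (h - 1) * hmQ
  have hM0 : M ≠ 0 := by
    rw [hM]
    exact Nat.mul_ne_zero hmodd.pos.ne' (by omega)
  have hcase2 : ∀ b : Fk, (b ≠ 0 ∧
      (Nat.card {d : Fk // Algebra.trace Fq Ff (Algebra.norm Ff d) + a = 0 ∧
          Algebra.trace Fq Fk (b * d) ≠ 0} : ℚ) = W2) ↔ b ^ M = 1 := by
    intro b
    constructor
    · rintro ⟨hb, h1⟩
      rw [hw' b hb] at h1
      by_contra h2
      rw [if_neg h2] at h1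
      exact hlt.ne h1
    · intro h1
      have hb : b ≠ 0 := by
        rintro rfl
        rw [zero_pow hM0] at h1
        exact zero_ne_one h1
      exact ⟨hb, by rw [hw' b hb, if_pos h1]⟩
  have hcase1 : ∀ b : Fk, (b ≠ 0 ∧
      (Nat.card {d : Fk // Algebra.trace Fq Ff (Algebra.norm Ff d) + a = 0 ∧
          Algebra.trace Fq Fk (b * d) ≠ 0} : ℚ) = W1) ↔ (b ≠ 0 ∧ ¬ b ^ M = 1) := by
    intro b
    refine and_congr_right (fun hb => ?_)
    rw [hw' b hb]
    split_ifs with h1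
    · simp [h1, hlt.ne']
    · simp [h1]
  have hge : ∀ b : Fk, b ≠ 0 → W1 ≤
      (Nat.card {d : Fk // Algebra.trace Fq Ff (Algebra.norm Ff d) + a = 0 ∧
          Algebra.trace Fq Fk (b * d) ≠ 0} : ℚ) := by
    intro b hb
    rw [hw' b hb]
    split_ifs
    · exact hlt.le
    · exact le_rfl
  refine ⟨?_, ?_, ?_, ?_, ?_, hge⟩
  · rw [Nat.card_congr (Equiv.subtypeEquivRight hcase1), Nat.card_eq_fintype_card,
      Fintype.card_subtype]
    rw [Nat.card_eq_fintype_card, Fintype.card_subtype] at hc1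
    have e1 := Finset.card_filter_add_card_filter_not
      (s := (Finset.univ : Finset Fk).erase 0) (fun b => b ^ M = 1)
    have e2 : ((Finset.univ : Finset Fk).erase 0).filter (fun b => b ^ M = 1)
        = Finset.univ.filter (fun b : Fk => b ^ M = 1) := by
      ext b
      simp only [Finset.mem_filter, Finset.mem_erase, Finset.mem_univ, and_true, true_and]
      exact ⟨fun h => h.2, fun h => ⟨((hcase2 b).2 h).1, h⟩⟩
    have e3 : ((Finset.univ : Finset Fk).erase 0).filter (fun b => ¬ b ^ M = 1)
        = Finset.univ.filter (fun b : Fk => b ≠ 0 ∧ ¬ b ^ M = 1) := by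
      ext b
      simp
    rw [e2, e3, hc1, Finset.card_erase_of_mem (Finset.mem_univ _), Finset.card_univ, hck,
      ← hMq] at e1
    have e1' := congrArg (Nat.cast (R := ℚ)) e1
    push_cast at e1'
    rw [eq_div_iff hq1]
    linear_combination ((q : ℚ) + 1) * e1' + (q : ℚ) * hMQ
  · rw [Nat.card_congr (Equiv.subtypeEquivRight hcase2), hc1, eq_div_iff hq1, hMQ]
  · intro b hb
    rw [hw' b hb]
    split_ifs
    · exact Or.inr rfl
    · exact Or.inl rfl
  · have e := congrArg (Nat.cast (R := ℚ)) hlen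
    have hq1' : ((q - 1 : ℕ) : ℚ) = q - 1 := by rw [Nat.cast_sub (by omega)]; simp
    push_cast [hq1'] at e
    rw [show (q : ℚ) ^ 2 - 1 = (q - 1) * (q + 1) by ring, eq_div_iff (mul_ne_zero hqm hq1)]
    linear_combination ((q : ℚ) + 1) * e - hMQ
  · intro b1 b2 h12
    by_contra hne
    have hb : b1 - b2 ≠ 0 := sub_ne_zero.2 hne
    have h1 := lt_of_lt_of_le hpos (hge _ hb)
    have h2 : 0 < Nat.card {d : Fk // Algebra.trace Fq Ff (Algebra.norm Ff d) + a = 0 ∧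
          Algebra.trace Fq Fk ((b1 - b2) * d) ≠ 0} := by exact_mod_cast h1
    obtain ⟨⟨d, hd1, hd2⟩⟩ := (Nat.card_pos_iff.1 h2).1
    have := congrFun h12 ⟨d, hd1⟩
    simp only at this
    exact hd2 (by rw [sub_mul, map_sub, this, sub_self])
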